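/- arXiv:math/0702124 — 5 statements merged into one kernel-verified Lean document; each statement's English description precedes it below -/
import Mathlib

section
/- Let M be a metric tree and let A be a bounded subset of M. Then α(A) = 2·β(A), where α is the set (Kuratowski) measure of noncompactness and β is the ball (Hausdorff) measure of noncompactness. -/
/-- `S` is a metric segment from `x` to `y` in a metric space: `S` contains `x` and `y`, and
the map `z ↦ dist x z` is an isometry from `S` onto the real interval `[0, dist x y]`. -/
def IsMetricSegment {X : Type*} [MetricSpace X] (S : Set X) (x y : X) : Prop :=
  x ∈ S ∧ y ∈ S ∧
    (∀ z ∈ S, ∀ w ∈ S, |dist x z - dist x w| = dist z w) ∧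
    (fun z => dist x z) '' S = Set.Icc 0 (dist x y)

/-- A metric tree structure on a metric space `M`: every pair of points is joined by a unique
metric segment `seg x y`, and if `[x,z] ∩ [z,y] = {z}` then `[x,z] ∪ [z,y] = [x,y]`. -/
structure MetricTree (M : Type*) [MetricSpace M] where
  seg : M → M → Set M
  seg_isSegment : ∀ x y : M, IsMetricSegment (seg x y) x y
  seg_unique : ∀ x y : M, ∀ S : Set M, IsMetricSegment S x y → S = seg x y
  seg_glue : ∀ x y z : M, seg x z ∩ seg z y = {z} → seg x z ∪ seg z y = seg x y

/-- The set (Kuratowski) measure of noncompactness of `A`: the infimum of all `b > 0` such that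
`A` admits a finite cover by subsets of `A` of diameter at most `b`. -/
noncomputable def setMNC {X : Type*} [MetricSpace X] (A : Set X) : ℝ :=
  sInf {b : ℝ | 0 < b ∧ ∃ (n : ℕ) (E : Fin n → Set X),
    (∀ j, E j ⊆ A) ∧ (∀ j, Metric.diam (E j) ≤ b) ∧ A ⊆ ⋃ j, E j}

/-- The ball (Hausdorff) measure of noncompactness of `A`: the infimum of all `b > 0` such that
`A` admits a finite cover by open balls of radius `b` centered in the ambient space. -/
noncomputable def ballMNC {X : Type*} [MetricSpace X] (A : Set X) : ℝ :=
  sInf {b : ℝ | 0 < b ∧ ∃ (n : ℕ) (c : Fin n → X), A ⊆ ⋃ j, Metric.ball (c j) b}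

/-- The diameter-based ball measure of noncompactness of `A`: the infimum of all `b > 0` such
that `A` admits a finite cover by open balls each of diameter at most `b`. -/
noncomputable def ballDiamMNC {X : Type*} [MetricSpace X] (A : Set X) : ℝ :=
  sInf {b : ℝ | 0 < b ∧ ∃ (n : ℕ) (c : Fin n → X) (r : Fin n → ℝ),
    (∀ j, Metric.diam (Metric.ball (c j) (r j)) ≤ b) ∧ A ⊆ ⋃ j, Metric.ball (c j) (r j)}

/-- `b > 0` is Lifschitz for `X` iff there is `a > 1` such that whenever `dist x y > r > 0`,
some closed ball of radius `r` contains `closedBall x (a*r) ∩ closedBall y (b*r)`. -/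
def IsLifschitz (X : Type*) [MetricSpace X] (b : ℝ) : Prop :=
  0 < b ∧ ∃ a : ℝ, 1 < a ∧ ∀ x y : X, ∀ r : ℝ, 0 < r → r < dist x y →
    ∃ z : X, Metric.closedBall x (a * r) ∩ Metric.closedBall y (b * r) ⊆ Metric.closedBall z r

/-- The Lifschitz characteristic of `X`: the supremum of all `b` Lifschitz for `X`. -/
noncomputable def lifschitzChar (X : Type*) [MetricSpace X] : ℝ :=
  sSup {b : ℝ | IsLifschitz X b}

/-!
A set of diameter `d` in a metric tree lies in balls of radius arbitrarily close to `d / 2`: if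
`x, y` nearly realise the diameter, centre the ball at the midpoint `c` of `[x, y]`. Seen from any
point `z`, the tree cannot branch off towards both `x` and `y` before reaching `c`, so `c` lies
between `z` and one of them, say `x`, and `dist z c = dist z x - dist x y / 2`. Hence a finite
cover by sets of diameter at most `b` yields one by balls of radius close to `b / 2`; conversely,
in any metric space, a ball of radius `r` has diameter at most `2 * r`.
-/

section MeasuresOfNoncompactness

open Metric

variable {X : Type*} [MetricSpace X] {A : Set X} {b r : ℝ}

theorem setMNC_nonneg (A : Set X) : 0 ≤ setMNC A :=
  Real.sInf_nonneg fun _ hb => hb.1.le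

theorem ballMNC_nonneg (A : Set X) : 0 ≤ ballMNC A :=
  Real.sInf_nonneg fun _ hb => hb.1.le

theorem setMNC_le_of_subset_iUnion {ι : Type*} [Finite ι] {E : ι → Set X} (hb : 0 < b)
    (hEA : ∀ i, E i ⊆ A) (hdiam : ∀ i, diam (E i) ≤ b) (hcover : A ⊆ ⋃ i, E i) :
    setMNC A ≤ b := by
  obtain ⟨n, ⟨e⟩⟩ := Finite.exists_equiv_fin ι
  exact csInf_le ⟨0, fun _ hb => hb.1.le⟩
    ⟨hb, n, E ∘ e.symm, fun _ => hEA _, fun _ => hdiam _,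
      hcover.trans_eq (e.symm.surjective.iUnion_comp E).symm⟩

theorem ballMNC_le_of_subset_iUnion_ball {ι : Type*} [Finite ι] {c : ι → X} (hr : 0 < r)
    (hcover : A ⊆ ⋃ i, ball (c i) r) : ballMNC A ≤ r := by
  obtain ⟨n, ⟨e⟩⟩ := Finite.exists_equiv_fin ι
  exact csInf_le ⟨0, fun _ hb => hb.1.le⟩
    ⟨hr, n, c ∘ e.symm, hcover.trans_eq (e.symm.surjective.iUnion_comp fun i => ball (c i) r).symm⟩

theorem exists_subset_iUnion_of_setMNC_lt (h : setMNC A < b) :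
    ∃ (n : ℕ) (E : Fin n → Set X),
      (∀ i, E i ⊆ A) ∧ (∀ i, diam (E i) < b) ∧ A ⊆ ⋃ i, E i := by
  have hne : {b : ℝ | 0 < b ∧ ∃ (n : ℕ) (E : Fin n → Set X),
      (∀ i, E i ⊆ A) ∧ (∀ i, diam (E i) ≤ b) ∧ A ⊆ ⋃ i, E i}.Nonempty :=
    ⟨diam A + 1, by positivity, 1, fun _ => A, fun _ => subset_rfl, fun _ => by linarith,
      Set.subset_iUnion_of_subset 0 subset_rfl⟩
  obtain ⟨b', ⟨-, n, E, hEA, hdiam, hcover⟩, hb'⟩ := exists_lt_of_csInf_lt hne h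
  exact ⟨n, E, hEA, fun i => (hdiam i).trans_lt hb', hcover⟩

theorem exists_subset_iUnion_ball_of_ballMNC_lt (hA : Bornology.IsBounded A)
    (h : ballMNC A < r) : ∃ (n : ℕ) (c : Fin n → X), A ⊆ ⋃ i, ball (c i) r := by
  have hne : {b : ℝ | 0 < b ∧ ∃ (n : ℕ) (c : Fin n → X), A ⊆ ⋃ i, ball (c i) b}.Nonempty := by
    rcases A.eq_empty_or_nonempty with rfl | ⟨x, -⟩
    · exact ⟨1, one_pos, 0, Fin.elim0, Set.empty_subset _⟩
    · obtain ⟨R, hR, hAR⟩ := hA.subset_ball_lt 0 x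
      exact ⟨R, hR, 1, fun _ => x, Set.subset_iUnion_of_subset 0 hAR⟩
  obtain ⟨r', ⟨-, n, c, hcover⟩, hr'⟩ := exists_lt_of_csInf_lt hne h
  exact ⟨n, c, hcover.trans (Set.iUnion_mono fun _ => ball_subset_ball hr'.le)⟩

theorem setMNC_le_two_mul_ballMNC (hA : Bornology.IsBounded A) :
    setMNC A ≤ 2 * ballMNC A := by
  suffices h : ∀ r, ballMNC A < r → setMNC A / 2 ≤ r by
    linarith [le_of_forall_gt_imp_ge_of_dense h]
  intro r hr
  have hr₀ : 0 < r := (ballMNC_nonneg A).trans_lt hr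
  obtain ⟨n, c, hcover⟩ := exists_subset_iUnion_ball_of_ballMNC_lt hA hr
  have hdiam (i : Fin n) : diam (A ∩ ball (c i) r) ≤ 2 * r :=
    (diam_mono Set.inter_subset_right isBounded_ball).trans (diam_ball hr₀.le)
  have hcover' : A ⊆ ⋃ i, A ∩ ball (c i) r := by
    rw [← Set.inter_iUnion]
    exact Set.subset_inter subset_rfl hcover
  linarith [setMNC_le_of_subset_iUnion (by positivity) (fun _ => Set.inter_subset_left) hdiam
    hcover']

theorem ballMNC_le_mul_setMNC {k : ℝ} (hk : 0 < k)
    (hball : ∀ E ⊆ A, E.Nonempty → ∀ r, k * diam E < r → ∃ c, E ⊆ ball c r) :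
    ballMNC A ≤ k * setMNC A := by
  refine le_of_forall_gt_imp_ge_of_dense fun r hr => ?_
  have hr₀ : 0 < r := (mul_nonneg hk.le (setMNC_nonneg A)).trans_lt hr
  obtain ⟨n, E, hEA, hdiam, hcover⟩ :=
    exists_subset_iUnion_of_setMNC_lt ((lt_div_iff₀' hk).2 hr)
  choose c hc using fun i : {i // (E i).Nonempty} =>
    hball (E i) (hEA i) i.2 r ((lt_div_iff₀' hk).1 (hdiam i))
  refine ballMNC_le_of_subset_iUnion_ball (c := c) hr₀ fun x hx => ?_
  obtain ⟨i, hxi⟩ := Set.mem_iUnion.1 (hcover hx)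
  exact Set.mem_iUnion.2 ⟨⟨i, x, hxi⟩, hc _ hxi⟩

end MeasuresOfNoncompactness

theorem IsMetricSegment.dist_add_dist {X : Type*} [MetricSpace X] {S : Set X} {x y z : X}
    (h : IsMetricSegment S x y) (hz : z ∈ S) : dist x z + dist z y = dist x y := by
  obtain ⟨-, hy, hiso, himage⟩ := h
  have hle : dist x z ≤ dist x y := (himage.subset ⟨z, hz, rfl⟩).2
  have hzy := hiso z hz y hy
  rw [abs_of_nonpos (by linarith)] at hzy
  linarith

namespace MetricTree

variable {M : Type*} [MetricSpace M]

theorem exists_midpoint (T : MetricTree M) (x y : M) :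
    ∃ c, dist x c = dist x y / 2 ∧ dist c y = dist x y / 2 := by
  have hseg := T.seg_isSegment x y
  obtain ⟨c, hcS, hc : dist x c = dist x y / 2⟩ :=
    hseg.2.2.2.superset ⟨by positivity, half_le_self dist_nonneg⟩
  exact ⟨c, hc, by linarith [hseg.dist_add_dist hcS]⟩

theorem exists_mem_seg_inter_seg_ne (T : MetricTree M) {x y z : M}
    (h : dist x z + dist z y ≠ dist x y) : ∃ p ∈ T.seg x z ∩ T.seg z y, p ≠ z := by
  have hz : z ∈ T.seg x z ∩ T.seg z y :=
    ⟨(T.seg_isSegment x z).2.1, (T.seg_isSegment z y).1⟩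
  by_contra! hsub
  have hglue := T.seg_glue x y z (Set.eq_singleton_iff_unique_mem.2 ⟨hz, hsub⟩)
  exact h ((T.seg_isSegment x y).dist_add_dist (hglue.subset (Or.inl hz.1)))

theorem dist_add_dist_eq_or_of_between (T : MetricTree M) {x y c : M}
    (hc : dist x c + dist c y = dist x y) (z : M) :
    dist z c + dist c x = dist z x ∨ dist z c + dist c y = dist z y := by
  by_contra! h
  obtain ⟨p, ⟨hp, hpx⟩, hpc⟩ := T.exists_mem_seg_inter_seg_ne h.1
  obtain ⟨q, ⟨hq, hqy⟩, hqc⟩ := T.exists_mem_seg_inter_seg_ne h.2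
  have hzpc := (T.seg_isSegment z c).dist_add_dist hp
  have hzqc := (T.seg_isSegment z c).dist_add_dist hq
  have hcpx := (T.seg_isSegment c x).dist_add_dist hpx
  have hcqy := (T.seg_isSegment c y).dist_add_dist hqy
  -- `p` and `q` lie on the same side of `c` in `[z, c]` ...
  have hlt : dist p q < dist p c + dist q c := by
    rw [← (T.seg_isSegment z c).2.2.1 p hp q hq, abs_lt]
    constructor <;> linarith [dist_pos.2 hpc, dist_pos.2 hqc]
  -- ... but on opposite sides of `c` in `[x, y]`.
  have hge : dist p c + dist q c ≤ dist p q := by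
    linarith [dist_triangle4 x p q y, dist_comm x p, dist_comm x c, dist_comm c p,
      dist_comm c q]
  exact hlt.not_ge hge

theorem exists_forall_dist_add_half_le_max (T : MetricTree M) (x y : M) :
    ∃ c, ∀ z, dist z c + dist x y / 2 ≤ max (dist z x) (dist z y) := by
  obtain ⟨c, hxc, hcy⟩ := T.exists_midpoint x y
  refine ⟨c, fun z => ?_⟩
  rcases T.dist_add_dist_eq_or_of_between (by linarith : dist x c + dist c y = dist x y) z
    with hx | hy
  · exact le_max_of_le_left (by linarith [dist_comm c x])
  · exact le_max_of_le_right (by linarith)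

theorem exists_subset_ball_of_half_diam_lt (T : MetricTree M) {E : Set M}
    (hE : Bornology.IsBounded E) (hne : E.Nonempty) {r : ℝ} (hr : Metric.diam E / 2 < r) :
    ∃ c, E ⊆ Metric.ball c r := by
  obtain ⟨x, hx, y, hy, hxy⟩ : ∃ x ∈ E, ∃ y ∈ E, 2 * (Metric.diam E - r) < dist x y := by
    by_contra! h
    linarith [Metric.diam_le_of_forall_dist_le_of_nonempty hne h]
  obtain ⟨c, hc⟩ := T.exists_forall_dist_add_half_le_max x y
  refine ⟨c, fun z hz => ?_⟩
  have hmax : max (dist z x) (dist z y) ≤ Metric.diam E :=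
    max_le (Metric.dist_le_diam_of_mem hE hz hx) (Metric.dist_le_diam_of_mem hE hz hy)
  rw [Metric.mem_ball]
  linarith [hc z]

end MetricTree

theorem stmt_0 {M : Type*} [MetricSpace M] (T : MetricTree M)
    (A : Set M) (hA : Bornology.IsBounded A) :
    setMNC A = 2 * ballMNC A := by
  have hle : ballMNC A ≤ 1 / 2 * setMNC A :=
    ballMNC_le_mul_setMNC one_half_pos fun E hEA hne r hr =>
      T.exists_subset_ball_of_half_diam_lt (hA.subset hEA) hne (by linarith)
  exact le_antisymm (setMNC_le_two_mul_ballMNC hA) (by linarith)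
end

section
/- Let E be a subset of a metric tree M with diam(E) = 2r. Then for every ε > 0 there exists a point m ∈ M such that E ⊆ B(m; r + ε), where B(m; s) denotes the open ball of radius s centered at m. -/
/-!
Let `m` be the midpoint of two points `x, y` of `E` with `2 * r - ε < dist x y`. In a tree, a
segment arriving at `m` from any third point `z` can share more than `m` with at most one of the two
halves `[m, x]`, `[m, y]`, so it extends geodesically through `m` to `x` or to `y`. Hence, for `z`
in `E`, `dist z m ≤ 2 * r - dist x y / 2 < r + ε`.
-/

theorem exists_lt_dist_of_lt_diam {α : Type*} [PseudoMetricSpace α] {s : Set α} {c : ℝ}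
    (hs : s.Nonempty) (hc : c < Metric.diam s) : ∃ x ∈ s, ∃ y ∈ s, c < dist x y := by
  by_contra! h
  exact hc.not_ge (Metric.diam_le_of_forall_dist_le_of_nonempty hs h)

namespace IsMetricSegment

variable {X : Type*} [MetricSpace X] {S : Set X} {x y z w : X}

theorem left_mem (hS : IsMetricSegment S x y) : x ∈ S :=
  hS.1

theorem right_mem (hS : IsMetricSegment S x y) : y ∈ S :=
  hS.2.1

theorem abs_dist_sub_dist (hS : IsMetricSegment S x y) (hz : z ∈ S) (hw : w ∈ S) :
    |dist x z - dist x w| = dist z w :=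
  hS.2.2.1 z hz w hw

theorem image_dist (hS : IsMetricSegment S x y) :
    (fun z => dist x z) '' S = Set.Icc 0 (dist x y) :=
  hS.2.2.2

theorem dist_add_dist_s2 (hS : IsMetricSegment S x y) (hz : z ∈ S) :
    dist x z + dist z y = dist x y := by
  have hle : dist x z ≤ dist x y := (hS.image_dist ▸ Set.mem_image_of_mem _ hz).2
  rw [← hS.abs_dist_sub_dist hz hS.right_mem, abs_of_nonpos (sub_nonpos.2 hle)]
  ring

theorem exists_midpoint (hS : IsMetricSegment S x y) :
    ∃ m ∈ S, dist m x = dist x y / 2 ∧ dist m y = dist x y / 2 := by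
  have hhalf : dist x y / 2 ∈ Set.Icc 0 (dist x y) :=
    ⟨by positivity, half_le_self dist_nonneg⟩
  obtain ⟨m, hm, hxm : dist x m = dist x y / 2⟩ := hS.image_dist ▸ hhalf
  have hadd := hS.dist_add_dist_s2 hm
  exact ⟨m, hm, dist_comm m x ▸ hxm, by linarith⟩

theorem dist_lt_dist_add_dist_right (hS : IsMetricSegment S x y) (hz : z ∈ S) (hw : w ∈ S)
    (hzy : z ≠ y) (hwy : w ≠ y) : dist z w < dist z y + dist y w := by
  have hz_add := hS.dist_add_dist_s2 hz
  have hw_add := hS.dist_add_dist_s2 hw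
  have hz_pos := dist_pos.2 hzy
  have hw_pos := dist_pos.2 hwy
  rw [← hS.abs_dist_sub_dist hz hw, dist_comm y w, abs_lt]
  constructor <;> linarith

end IsMetricSegment

namespace MetricTree

variable {M : Type*} [MetricSpace M] {x y z m : M}

theorem exists_mem_inter_ne_of_dist_lt (T : MetricTree M)
    (h : dist x y < dist x z + dist z y) : ∃ a ∈ T.seg x z ∩ T.seg z y, a ≠ z := by
  have hz : z ∈ T.seg x z := (T.seg_isSegment x z).right_mem
  have hz' : z ∈ T.seg z y := (T.seg_isSegment z y).left_mem
  by_contra! hunique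
  have hglue : T.seg x z ∪ T.seg z y = T.seg x y :=
    T.seg_glue x y z (Set.eq_singleton_iff_unique_mem.2 ⟨⟨hz, hz'⟩, hunique⟩)
  exact h.ne' ((T.seg_isSegment x y).dist_add_dist_s2 (hglue ▸ Or.inl hz))

theorem dist_add_dist_eq_or_of_mem_seg (T : MetricTree M) (hm : m ∈ T.seg x y) (z : M) :
    dist z m + dist m x = dist z x ∨ dist z m + dist m y = dist z y := by
  by_contra! ⟨hx, hy⟩
  obtain ⟨a, ⟨haz, hax⟩, ham⟩ :=
    T.exists_mem_inter_ne_of_dist_lt ((dist_triangle z m x).lt_of_ne' hx)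
  obtain ⟨b, ⟨hbz, hby⟩, hbm⟩ :=
    T.exists_mem_inter_ne_of_dist_lt ((dist_triangle z m y).lt_of_ne' hy)
  have hab : dist a b < dist a m + dist m b :=
    (T.seg_isSegment z m).dist_lt_dist_add_dist_right haz hbz ham hbm
  -- The path through `a` and `b` would be a shortcut past `m`.
  have hshort : dist x y < dist x m + dist m y :=
    calc
      dist x y ≤ dist x a + dist a b + dist b y := dist_triangle4 x a b y
      _ < dist x a + (dist a m + dist m b) + dist b y := by gcongr
      _ = (dist m a + dist a x) + (dist m b + dist b y) := by
        rw [dist_comm x a, dist_comm a m]; ring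
      _ = dist x m + dist m y := by
        rw [(T.seg_isSegment m x).dist_add_dist_s2 hax, (T.seg_isSegment m y).dist_add_dist_s2 hby,
          dist_comm m x]
  exact hshort.ne' ((T.seg_isSegment x y).dist_add_dist_s2 hm)

theorem dist_add_min_dist_le_max_dist (T : MetricTree M) (hm : m ∈ T.seg x y) (z : M) :
    dist z m + min (dist m x) (dist m y) ≤ max (dist z x) (dist z y) := by
  rcases T.dist_add_dist_eq_or_of_mem_seg hm z with h | h
  · exact (add_le_add_right (min_le_left _ _) _).trans (h.le.trans (le_max_left _ _))
  · exact (add_le_add_right (min_le_right _ _) _).trans (h.le.trans (le_max_right _ _))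

theorem subset_closedBall_of_mem_seg (T : MetricTree M) {E : Set M}
    (hE : Bornology.IsBounded E) (hx : x ∈ E) (hy : y ∈ E) (hm : m ∈ T.seg x y) :
    E ⊆ Metric.closedBall m (Metric.diam E - min (dist m x) (dist m y)) := fun z hz =>
  le_sub_iff_add_le.2 <| (T.dist_add_min_dist_le_max_dist hm z).trans <|
    max_le (Metric.dist_le_diam_of_mem hE hz hx) (Metric.dist_le_diam_of_mem hE hz hy)

end MetricTree

theorem stmt_2 {M : Type*} [MetricSpace M] [Nonempty M] (T : MetricTree M)
    (E : Set M) (r : ℝ) (hE : Bornology.IsBounded E) (hdiam : Metric.diam E = 2 * r) :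
    ∀ ε : ℝ, 0 < ε → ∃ m : M, E ⊆ Metric.ball m (r + ε) := by
  intro ε hε
  rcases E.eq_empty_or_nonempty with rfl | hne
  · exact ⟨Classical.arbitrary M, Set.empty_subset _⟩
  obtain ⟨x, hx, y, hy, hxy⟩ : ∃ x ∈ E, ∃ y ∈ E, 2 * r - ε < dist x y :=
    exists_lt_dist_of_lt_diam hne (by linarith)
  obtain ⟨m, hm, hmx, hmy⟩ := (T.seg_isSegment x y).exists_midpoint
  refine ⟨m, (T.subset_closedBall_of_mem_seg hE hx hy hm).trans
    (Metric.closedBall_subset_ball ?_)⟩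
  rw [hdiam, hmx, hmy, min_self]
  linarith
end

section
/- Let M be a metric space and let A ⊆ M be a bounded subset with diam(A) = D. Then for every b > 0 that is Lifschitz for M there exists z ∈ M such that A ⊆ B_c(z; D/b), where B_c(z; s) denotes the closed ball of radius s centered at z. -/
/-!
Call `s` admissible if some closed ball of radius `s` contains `A`. When `b * s` bounds the
distances in `A` and `1 < a` is as in the Lifschitz condition, `s` is admissible as soon as `a * s`
is: if the ball of radius `a * s` about `x` contains `A` but the one of radius `s` does not, then
some `y ∈ A` has `s < dist x y`, and `A` lies in the balls of radii `a * s` about `x` and `b * s`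
about `y`. The radius `D` is admissible, and dividing by `a` repeatedly brings it down to `D / b`
after finitely many steps, so no limit of centers is taken.
-/

open Metric

theorem mem_of_isUpperSet_of_mul_mem {R : Type*} [Semiring R] [PartialOrder R]
    [IsStrictOrderedRing R] [ExistsAddOfLE R] [Archimedean R] {S : Set R} {a r : R}
    (hS : IsUpperSet S) (hne : S.Nonempty) (ha : 1 < a) (hr : 0 < r)
    (hmul : ∀ s, r ≤ s → a * s ∈ S → s ∈ S) : r ∈ S := by
  have descent (n : ℕ) (hn : a ^ n * r ∈ S) : r ∈ S := by
    induction n with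
    | zero => simpa using hn
    | succ n ih =>
      refine ih (hmul _ (le_mul_of_one_le_left hr.le (one_le_pow₀ ha.le)) ?_)
      rwa [← mul_assoc, ← pow_succ']
  obtain ⟨t, ht⟩ := hne
  obtain ⟨k, hk⟩ := Archimedean.arch t hr
  obtain ⟨n, hn⟩ := pow_unbounded_of_one_lt (k : R) ha
  refine descent n (hS ?_ ht)
  calc
    t ≤ k * r := by rwa [← nsmul_eq_mul]
    _ ≤ a ^ n * r := by gcongr

theorem isUpperSet_setOf_exists_subset_closedBall {X : Type*} [PseudoMetricSpace X] (A : Set X) :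
    IsUpperSet {s : ℝ | ∃ x, A ⊆ closedBall x s} :=
  fun _ _ hst ⟨x, hx⟩ => ⟨x, hx.trans (closedBall_subset_closedBall hst)⟩

namespace IsLifschitz

variable {X : Type*} [MetricSpace X] {b : ℝ}

theorem exists_one_lt_forall_subset_closedBall_of_mul (hb : IsLifschitz X b) :
    ∃ a : ℝ, 1 < a ∧ ∀ (A : Set X) (s : ℝ), 0 < s → (∀ x ∈ A, ∀ y ∈ A, dist x y ≤ b * s) →
      (∃ x, A ⊆ closedBall x (a * s)) → ∃ z, A ⊆ closedBall z s := by
  obtain ⟨-, a, ha, hinter⟩ := hb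
  refine ⟨a, ha, ?_⟩
  rintro A s hs hA ⟨x, hx⟩
  by_cases hxs : A ⊆ closedBall x s
  · exact ⟨x, hxs⟩
  obtain ⟨y, hyA, hy⟩ := Set.not_subset.mp hxs
  have hxy : s < dist x y := by simpa only [mem_closedBall', not_le] using hy
  obtain ⟨z, hz⟩ := hinter x y s hs hxy
  exact ⟨z, fun w hw => hz ⟨hx hw, hA w hw y hyA⟩⟩

theorem exists_subset_closedBall_of_dist_le [Nonempty X] (hb : IsLifschitz X b) {A : Set X} {r : ℝ}
    (hA : ∀ x ∈ A, ∀ y ∈ A, dist x y ≤ b * r) : ∃ z, A ⊆ closedBall z r := by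
  obtain rfl | ⟨p, hp⟩ := A.eq_empty_or_nonempty
  · exact ⟨Classical.arbitrary X, Set.empty_subset _⟩
  have hr : 0 ≤ r := (mul_nonneg_iff_of_pos_left hb.1).mp (dist_nonneg.trans (hA p hp p hp))
  obtain rfl | hr := hr.eq_or_lt
  · exact ⟨p, fun x hx => by simpa only [mem_closedBall, mul_zero] using hA x hx p hp⟩
  obtain ⟨a, ha, shrink⟩ := hb.exists_one_lt_forall_subset_closedBall_of_mul
  have hsubset : A ⊆ closedBall p (b * r) := fun x hx => hA x hx p hp
  have hdist (s : ℝ) (hrs : r ≤ s) : ∀ x ∈ A, ∀ y ∈ A, dist x y ≤ b * s :=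
    fun x hx y hy => (hA x hx y hy).trans (mul_le_mul_of_nonneg_left hrs hb.1.le)
  change r ∈ {s : ℝ | ∃ z, A ⊆ closedBall z s}
  exact mem_of_isUpperSet_of_mul_mem (isUpperSet_setOf_exists_subset_closedBall A)
    ⟨b * r, p, hsubset⟩ ha hr fun s hrs => shrink A s (hr.trans_le hrs) (hdist s hrs)

end IsLifschitz

theorem stmt_9 {M : Type*} [MetricSpace M] [Nonempty M] (A : Set M)
    (hA : Bornology.IsBounded A) (D : ℝ) (hD : Metric.diam A = D)
    (b : ℝ) (hb : IsLifschitz M b) :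
    ∃ z : M, A ⊆ Metric.closedBall z (D / b) := by
  refine hb.exists_subset_closedBall_of_dist_le fun x hx y hy => ?_
  rw [mul_div_cancel₀ D hb.1.ne', ← hD]
  exact dist_le_diam_of_mem hA hx hy
end

section
/- Let M be a metric tree and x, y, z ∈ M. Then there exists w ∈ M such that [x,z] ∩ [y,z] = [w,z] and [x,y] ∩ [w,z] = {w}. -/
/-!
The point `w` is the median of `x`, `y`, `z`. Since segments are compact, `[x,z] ∩ [y,z]` has a
point `w` farthest from `z`; maximality forces `[x,w] ∩ [w,y] = {w}`, so the tree axiom puts `w` on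
`[x,y]` as well. In a tree `[x,y]` is the set of `p` with `d(x,p) + d(p,y) = d(x,y)`, and both
identities then follow from the betweenness calculus of this relation, together with the linear
order on the segment `[x,z]`.
-/

/-- The metric interval between `x` and `y`: the points at which the triangle inequality is an
equality. In a metric tree it coincides with the segment `[x,y]`. -/
def metricInterval {X : Type*} [PseudoMetricSpace X] (x y : X) : Set X :=
  {p | dist x p + dist p y = dist x y}

section PseudoMetricSpace

variable {X : Type*} [PseudoMetricSpace X] {x y p q : X}

theorem mem_metricInterval : p ∈ metricInterval x y ↔ dist x p + dist p y = dist x y :=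
  Iff.rfl

theorem right_mem_metricInterval (x y : X) : y ∈ metricInterval x y := by
  simp [mem_metricInterval]

theorem metricInterval_comm (x y : X) : metricInterval x y = metricInterval y x := by
  ext p
  rw [mem_metricInterval, mem_metricInterval, add_comm, dist_comm p y, dist_comm x p, dist_comm x y]

theorem left_mem_metricInterval (x y : X) : x ∈ metricInterval x y :=
  metricInterval_comm y x ▸ right_mem_metricInterval y x

theorem metricInterval_subset_left (hp : p ∈ metricInterval x y) :
    metricInterval x p ⊆ metricInterval x y := by
  intro q hq
  rw [mem_metricInterval] at hp hq ⊢
  linarith [dist_triangle q p y, dist_triangle x q y]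

theorem metricInterval_subset_right (hp : p ∈ metricInterval x y) :
    metricInterval p y ⊆ metricInterval x y := by
  rw [metricInterval_comm] at hp
  simpa only [metricInterval_comm y] using metricInterval_subset_left hp

theorem mem_metricInterval_of_mem_left (hp : p ∈ metricInterval x y)
    (hq : q ∈ metricInterval x p) : p ∈ metricInterval q y := by
  have hqy := metricInterval_subset_left hp hq
  rw [mem_metricInterval] at hp hq hqy ⊢
  linarith

theorem mem_metricInterval_of_mem_right (hp : p ∈ metricInterval x y)
    (hq : q ∈ metricInterval p y) : p ∈ metricInterval x q := by
  rw [metricInterval_comm] at hp hq ⊢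
  exact mem_metricInterval_of_mem_left hp hq

end PseudoMetricSpace

section MetricSpace

variable {X : Type*} [MetricSpace X] {S S' : Set X} {w x y z p q : X}

theorem eq_of_mem_metricInterval (hp : p ∈ metricInterval q y) (hq : q ∈ metricInterval p y) :
    p = q := by
  rw [mem_metricInterval] at hp hq
  exact dist_le_zero.1 (by linarith [dist_comm p q])

theorem metricInterval_inter_of_mem (hp : p ∈ metricInterval x y) :
    metricInterval x p ∩ metricInterval p y = {p} := by
  refine Set.Subset.antisymm ?_
    (Set.singleton_subset_iff.2 ⟨right_mem_metricInterval x p, left_mem_metricInterval p y⟩)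
  rintro q ⟨hqx, hqy⟩
  exact eq_of_mem_metricInterval hqy (mem_metricInterval_of_mem_left hp hqx)

theorem metricInterval_inter_eq_singleton_of_median (hxy : w ∈ metricInterval x y)
    (hxz : w ∈ metricInterval x z) (hyz : w ∈ metricInterval y z) :
    metricInterval x y ∩ metricInterval w z = {w} := by
  refine Set.Subset.antisymm ?_ (Set.singleton_subset_iff.2 ⟨hxy, left_mem_metricInterval w z⟩)
  rintro p ⟨hpxy, hpwz⟩
  have hw_xp : w ∈ metricInterval x p := mem_metricInterval_of_mem_right hxz hpwz
  have hw_py : w ∈ metricInterval p y :=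
    metricInterval_comm y p ▸ mem_metricInterval_of_mem_right hyz hpwz
  have hp_wy : p ∈ metricInterval w y := mem_metricInterval_of_mem_left hpxy hw_xp
  exact eq_of_mem_metricInterval hp_wy hw_py

namespace IsMetricSegment

theorem dist_le (h : IsMetricSegment S x y) (hp : p ∈ S) : dist x p ≤ dist x y :=
  (h.2.2.2.subset (Set.mem_image_of_mem _ hp)).2

theorem dist_eq_sub (h : IsMetricSegment S x y) (hp : p ∈ S) (hq : q ∈ S)
    (hle : dist x p ≤ dist x q) : dist p q = dist x q - dist x p := by
  rw [← h.2.2.1 p hp q hq, abs_sub_comm, abs_of_nonneg (sub_nonneg.2 hle)]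

theorem subset_metricInterval (h : IsMetricSegment S x y) : S ⊆ metricInterval x y := by
  intro p hp
  rw [mem_metricInterval, h.dist_eq_sub hp h.2.1 (h.dist_le hp), add_sub_cancel]

theorem mem_metricInterval_of_dist_le (h : IsMetricSegment S x y) (hp : p ∈ S) (hq : q ∈ S)
    (hle : dist x p ≤ dist x q) : q ∈ metricInterval p y := by
  rw [mem_metricInterval, h.dist_eq_sub hp hq hle, h.dist_eq_sub hq h.2.1 (h.dist_le hq),
    h.dist_eq_sub hp h.2.1 (h.dist_le hp)]
  ring

theorem isCompact (h : IsMetricSegment S x y) : IsCompact S := by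
  have hisom : Isometry fun p : S => dist x p :=
    Isometry.of_dist_eq fun p q => h.2.2.1 p p.2 q q.2
  rw [isCompact_iff_isCompact_univ, hisom.isUniformInducing.isInducing.isCompact_iff,
    Set.image_univ, ← Set.image_eq_range, h.2.2.2]
  exact isCompact_Icc

theorem union (h : IsMetricSegment S x p) (h' : IsMetricSegment S' p y)
    (hp : p ∈ metricInterval x y) : IsMetricSegment (S ∪ S') x y := by
  have hdist_right : ∀ b ∈ S', dist x b = dist x p + dist p b := fun b hb =>
    (mem_metricInterval_of_mem_right hp (h'.subset_metricInterval hb)).symm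
  have hdist_cross : ∀ a ∈ S, ∀ b ∈ S', |dist x a - dist x b| = dist a b := by
    intro a ha b hb
    have ha_xb : a ∈ metricInterval x b :=
      metricInterval_subset_left
        (mem_metricInterval_of_mem_right hp (h'.subset_metricInterval hb))
        (h.subset_metricInterval ha)
    rw [← mem_metricInterval.1 ha_xb, sub_add_cancel_left, abs_neg, abs_of_nonneg dist_nonneg]
  refine ⟨.inl h.1, .inr h'.2.1, ?_, ?_⟩
  · rintro a (ha | ha) b (hb | hb)
    · exact h.2.2.1 a ha b hb
    · exact hdist_cross a ha b hb
    · rw [abs_sub_comm, dist_comm a b]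
      exact hdist_cross b hb a ha
    · rw [hdist_right a ha, hdist_right b hb, add_sub_add_left_eq_sub]
      exact h'.2.2.1 a ha b hb
  · have himage_right : (fun b => dist x b) '' S' = Set.Icc (dist x p) (dist x y) := by
      rw [Set.image_congr hdist_right, ← Set.image_image (dist x p + ·) (dist p ·), h'.2.2.2,
        Set.image_const_add_Icc, add_zero, mem_metricInterval.1 hp]
    rw [Set.image_union, h.2.2.2, himage_right, Set.Icc_union_Icc_eq_Icc dist_nonneg]
    linarith [mem_metricInterval.1 hp, dist_nonneg (x := p) (y := y)]

theorem metricInterval_inter_eq_of_median (h : IsMetricSegment (metricInterval x z) x z)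
    (hxy : w ∈ metricInterval x y) (hxz : w ∈ metricInterval x z)
    (hyz : w ∈ metricInterval y z) :
    metricInterval x z ∩ metricInterval y z = metricInterval w z := by
  refine Set.Subset.antisymm ?_
    (Set.subset_inter (metricInterval_subset_right hxz) (metricInterval_subset_right hyz))
  rintro p ⟨hpx, hpy⟩
  rcases le_total (dist x w) (dist x p) with hwp | hpw
  · exact h.mem_metricInterval_of_dist_le hxz hpx hwp
  · have hw_pz : w ∈ metricInterval p z := h.mem_metricInterval_of_dist_le hpx hxz hpw
    have hp_xw : p ∈ metricInterval x w := mem_metricInterval_of_mem_right hpx hw_pz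
    have hp_wy : p ∈ metricInterval w y :=
      metricInterval_comm y w ▸ mem_metricInterval_of_mem_right hpy hw_pz
    obtain rfl : p = w := (metricInterval_inter_of_mem hxy).subset ⟨hp_xw, hp_wy⟩
    exact left_mem_metricInterval p z

end IsMetricSegment

end MetricSpace

namespace MetricTree

variable {M : Type*} [MetricSpace M]

theorem seg_eq_metricInterval (T : MetricTree M) (x y : M) : T.seg x y = metricInterval x y := by
  refine Set.Subset.antisymm (T.seg_isSegment x y).subset_metricInterval fun p hp => ?_
  rw [← T.seg_unique x y _ ((T.seg_isSegment x p).union (T.seg_isSegment p y) hp)]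
  exact .inl (T.seg_isSegment x p).2.1

theorem isMetricSegment_metricInterval (T : MetricTree M) (x y : M) :
    IsMetricSegment (metricInterval x y) x y :=
  T.seg_eq_metricInterval x y ▸ T.seg_isSegment x y

theorem mem_metricInterval_of_inter_eq_singleton (T : MetricTree M) {x y w : M}
    (h : metricInterval x w ∩ metricInterval w y = {w}) : w ∈ metricInterval x y := by
  simp only [← T.seg_eq_metricInterval] at h ⊢
  rw [← T.seg_glue x y w h]
  exact .inl (T.seg_isSegment x w).2.1

theorem exists_median (T : MetricTree M) (x y z : M) :
    ∃ w, w ∈ metricInterval x y ∧ w ∈ metricInterval x z ∧ w ∈ metricInterval y z := by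
  have hcompact : IsCompact (metricInterval x z ∩ metricInterval y z) :=
    (T.isMetricSegment_metricInterval x z).isCompact.inter
      (T.isMetricSegment_metricInterval y z).isCompact
  obtain ⟨w, ⟨hwx, hwy⟩, hmax⟩ := hcompact.exists_isMaxOn
    ⟨z, right_mem_metricInterval x z, right_mem_metricInterval y z⟩
    (f := (dist · z)) (by fun_prop)
  refine ⟨w, T.mem_metricInterval_of_inter_eq_singleton ?_, hwx, hwy⟩
  refine Set.Subset.antisymm ?_
    (Set.singleton_subset_iff.2 ⟨right_mem_metricInterval x w, left_mem_metricInterval w y⟩)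
  rintro p ⟨hpx, hpy⟩
  rw [metricInterval_comm] at hpy
  have hle : dist p z ≤ dist w z :=
    hmax ⟨metricInterval_subset_left hwx hpx, metricInterval_subset_left hwy hpy⟩
  have hadd : dist p w + dist w z = dist p z := mem_metricInterval_of_mem_left hwx hpx
  exact dist_le_zero.1 (by linarith)

end MetricTree

theorem stmt_11 {M : Type*} [MetricSpace M] (T : MetricTree M) (x y z : M) :
    ∃ w : M, T.seg x z ∩ T.seg y z = T.seg w z ∧ T.seg x y ∩ T.seg w z = {w} := by
  obtain ⟨w, hxy, hxz, hyz⟩ := T.exists_median x y z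
  simp only [T.seg_eq_metricInterval]
  exact ⟨w, (T.isMetricSegment_metricInterval x z).metricInterval_inter_eq_of_median hxy hxz hyz,
    metricInterval_inter_eq_singleton_of_median hxy hxz hyz⟩
end

section
/- Let M be a compact metric tree and a ∈ M. Then M = ⋃_{f ∈ F} [a, f], where F is the set of final points (leaves) of M and [a,f] is the unique metric segment from a to f. -/
/-!
Order the points of `M` by `y ≤ z` iff `y ∈ [a, z]`. On a chain the metric is the difference of
the distances to `a`, so in a complete bounded tree every chain has an upper bound, and Zorn's
lemma puts a maximal point `f` above any given `x`.

A maximal point is a leaf. If `f ∈ [y, z]`, then `f ∈ [a, y]` or `f ∈ [a, z]`: otherwise gluing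
shows that both `[f, y]` and `[f, z]` share a nontrivial piece with `[a, f]`, so the path from
`y` to `z` through `f` backtracks and is not geodesic. By maximality `f` is then `y` or `z`.
-/

/-- Metric betweenness: `y` lies between `x` and `z` if it gives equality in the triangle
inequality. In a metric tree this is membership in the segment `[x, z]`; for fixed `a`, the
relation `DistBtw a` is the order on `M` rooted at `a`. -/
def DistBtw {X : Type*} [PseudoMetricSpace X] (x y z : X) : Prop :=
  dist x y + dist y z = dist x z

namespace DistBtw

section PseudoMetricSpace

variable {X : Type*} [PseudoMetricSpace X] {w x y z : X}

theorem refl_right (x y : X) : DistBtw x y y := by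
  simp [DistBtw]

theorem trans_left (h : DistBtw w y z) (hx : DistBtw w x y) : DistBtw w x z := by
  unfold DistBtw at *
  linarith [dist_triangle w x z, dist_triangle x y z]

theorem trans_right_left (h : DistBtw w x z) (hy : DistBtw x y z) : DistBtw w x y := by
  unfold DistBtw at *
  linarith [dist_triangle w y z, dist_triangle w x y]

theorem abs_dist_sub_dist (h : DistBtw x y z) : |dist x y - dist x z| = dist y z := by
  rw [abs_sub_comm, ← h, add_sub_cancel_left, abs_of_nonneg dist_nonneg]

end PseudoMetricSpace

theorem antisymm {X : Type*} [MetricSpace X] {x y z : X} (hyz : DistBtw x y z)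
    (hzy : DistBtw x z y) : y = z := by
  unfold DistBtw at *
  exact dist_le_zero.mp (by linarith [dist_comm y z])

end DistBtw

section Maximal

open Filter Topology

variable {X : Type*}

theorem abs_dist_sub_dist_of_isChain [PseudoMetricSpace X] {a y z : X} {c : Set X}
    (hc : IsChain (DistBtw a) c) (hy : y ∈ c) (hz : z ∈ c) :
    |dist a y - dist a z| = dist y z := by
  have : Std.Refl (DistBtw a) := ⟨DistBtw.refl_right a⟩
  rcases hc.total hy hz with h | h
  · exact h.abs_dist_sub_dist
  · rw [abs_sub_comm, h.abs_dist_sub_dist, dist_comm]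

theorem exists_forall_distBtw_of_isChain [PseudoMetricSpace X] [CompleteSpace X] {a : X}
    {c : Set X} (hc : IsChain (DistBtw a) c) (hne : c.Nonempty) (hbdd : BddAbove (dist a '' c)) :
    ∃ u, ∀ y ∈ c, DistBtw a y u := by
  obtain ⟨d, -, hd, hdc⟩ := exists_seq_tendsto_sSup (hne.image (dist a)) hbdd
  choose v hvc hvd using hdc
  have hv_cauchy : CauchySeq v := by
    rw [cauchySeq_iff_tendsto_dist_atTop_0]
    refine (cauchySeq_iff_tendsto_dist_atTop_0.mp hd.cauchySeq).congr fun n => ?_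
    rw [Real.dist_eq, ← hvd, ← hvd, abs_dist_sub_dist_of_isChain hc (hvc _) (hvc _)]
  obtain ⟨u, hu⟩ := cauchySeq_tendsto_of_complete hv_cauchy
  have hau : dist a u = sSup (dist a '' c) :=
    tendsto_nhds_unique (tendsto_const_nhds.dist hu) (by simpa only [hvd] using hd)
  refine ⟨u, fun y hy => ?_⟩
  have hyu : dist y u = |dist a y - dist a u| := by
    refine tendsto_nhds_unique (tendsto_const_nhds.dist hu) ?_
    simpa only [abs_dist_sub_dist_of_isChain hc hy (hvc _)] using
      ((tendsto_const_nhds (x := a)).dist hu |>.const_sub (dist a y)).abs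
  have hle : dist a y ≤ dist a u := hau ▸ le_csSup hbdd (Set.mem_image_of_mem _ hy)
  rw [DistBtw, hyu, abs_of_nonpos (sub_nonpos.mpr hle)]
  ring

theorem exists_maximal_distBtw [MetricSpace X] [CompleteSpace X] [BoundedSpace X] (a x : X) :
    ∃ f, DistBtw a x f ∧ ∀ y, DistBtw a f y → y = f := by
  let _ : Preorder X :=
    { le := DistBtw a
      le_refl := DistBtw.refl_right a
      le_trans := fun _ _ _ hxy hyz => hyz.trans_left hxy }
  have hbdd (c : Set X) : BddAbove (dist a '' c) :=
    ((LipschitzWith.dist_right a).isBounded_image (.all c)).bddAbove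
  obtain ⟨f, hxf, hf⟩ := zorn_le_nonempty_Ici₀ x
    (fun c _ hc y hy => exists_forall_distBtw_of_isChain hc ⟨y, hy⟩ (hbdd c)) x le_rfl
  exact ⟨f, hxf, fun y hy => DistBtw.antisymm (hf hy) hy⟩

end Maximal

namespace IsMetricSegment

variable {X : Type*} [MetricSpace X] {S T : Set X} {x y z : X}

theorem distBtw (h : IsMetricSegment S x y) (hz : z ∈ S) : DistBtw x z y := by
  obtain ⟨-, hy, hisom, himage⟩ := h
  have hle : dist x z ≤ dist x y := (himage ▸ Set.mem_image_of_mem _ hz).2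
  rw [DistBtw, ← hisom z hz y hy, abs_of_nonpos (sub_nonpos.mpr hle)]
  ring

theorem image_dist_union (hS : IsMetricSegment S x z) (hT : IsMetricSegment T z y)
    (hz : DistBtw x z y) :
    (fun w => dist x w) '' (S ∪ T) = Set.Icc 0 (dist x y) := by
  have hT_image : (fun w => dist x w) '' T = Set.Icc (dist x z) (dist x y) :=
    calc
      (fun w => dist x w) '' T = (fun w => dist x z + dist z w) '' T :=
        Set.image_congr fun w hw => Eq.symm (hz.trans_right_left (hT.distBtw hw))
      _ = (fun r => dist x z + r) '' ((fun w => dist z w) '' T) := by rw [Set.image_image]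
      _ = Set.Icc (dist x z) (dist x y) := by
        rw [hT.2.2.2, Set.image_const_add_Icc, add_zero, hz]
  rw [Set.image_union, hS.2.2.2, hT_image]
  exact Set.Icc_union_Icc_eq_Icc dist_nonneg (hz ▸ le_add_of_nonneg_right dist_nonneg)

theorem union_s16 (hS : IsMetricSegment S x z) (hT : IsMetricSegment T z y) (hz : DistBtw x z y) :
    IsMetricSegment (S ∪ T) x y := by
  have hzT {v : X} (hv : v ∈ T) : DistBtw x z v := hz.trans_right_left (hT.distBtw hv)
  have hST {u v : X} (hu : u ∈ S) (hv : v ∈ T) : |dist x u - dist x v| = dist u v :=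
    ((hzT hv).trans_left (hS.distBtw hu)).abs_dist_sub_dist
  refine ⟨.inl hS.1, .inr hT.2.1, ?_, hS.image_dist_union hT hz⟩
  rintro u (hu | hu) v (hv | hv)
  · exact hS.2.2.1 u hu v hv
  · exact hST hu hv
  · rw [abs_sub_comm, hST hv hu, dist_comm]
  · rw [← hzT hu, ← hzT hv, add_sub_add_left_eq_sub]
    exact hT.2.2.1 u hu v hv

end IsMetricSegment

namespace MetricTree

variable {M : Type*} [MetricSpace M] (T : MetricTree M) {a f x y z : M}

theorem left_mem_seg (x y : M) : x ∈ T.seg x y :=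
  (T.seg_isSegment x y).1

theorem right_mem_seg (x y : M) : y ∈ T.seg x y :=
  (T.seg_isSegment x y).2.1

theorem mem_seg_iff : z ∈ T.seg x y ↔ DistBtw x z y := by
  refine ⟨(T.seg_isSegment x y).distBtw, fun h => ?_⟩
  rw [← T.seg_unique x y _ ((T.seg_isSegment x z).union_s16 (T.seg_isSegment z y) h)]
  exact .inl (T.right_mem_seg x z)

theorem exists_ne_mem_seg_inter_seg (h : z ∉ T.seg x y) :
    ∃ p ∈ T.seg x z ∩ T.seg z y, p ≠ z := by
  contrapose! h
  have hz : z ∈ T.seg x z ∩ T.seg z y := ⟨T.right_mem_seg x z, T.left_mem_seg z y⟩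
  rw [← T.seg_glue x y z (Set.eq_singleton_iff_unique_mem.mpr ⟨hz, h⟩)]
  exact .inl hz.1

theorem mem_seg_or_mem_seg (a : M) (h : f ∈ T.seg y z) : f ∈ T.seg a y ∨ f ∈ T.seg a z := by
  by_contra! hf
  obtain ⟨p, ⟨hap, hpy⟩, hpf⟩ := T.exists_ne_mem_seg_inter_seg hf.1
  obtain ⟨q, ⟨haq, hqz⟩, hqf⟩ := T.exists_ne_mem_seg_inter_seg hf.2
  have hpq : dist p q = |dist a p - dist a q| := ((T.seg_isSegment a f).2.2.1 p hap q haq).symm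
  rw [mem_seg_iff, DistBtw] at h hap haq hpy hqz
  have hpq_lt : dist p q < dist f p + dist f q := by
    have hfp : 0 < dist f p := dist_pos.mpr hpf.symm
    have hfq : 0 < dist f q := dist_pos.mpr hqf.symm
    rw [hpq, abs_lt]
    constructor <;> linarith [dist_comm f p, dist_comm f q]
  have : dist y z < dist y z :=
    calc
      dist y z ≤ dist y p + dist p q + dist q z := dist_triangle4 y p q z
      _ < dist y p + (dist f p + dist f q) + dist q z := by gcongr
      _ = (dist f p + dist p y) + (dist f q + dist q z) := by rw [dist_comm y p]; ring
      _ = dist y z := by rw [hpy, hqz, dist_comm f y, h]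
  exact this.false

/-- The final points of a metric tree: those interior to no segment. -/
def leaves : Set M :=
  {f | ∀ x y : M, f ∉ T.seg x y \ {x, y}}

theorem mem_leaves_of_maximal (hf : ∀ y, f ∈ T.seg a y → y = f) : f ∈ T.leaves := by
  rintro y z ⟨hyz, hne⟩
  rcases T.mem_seg_or_mem_seg a hyz with h | h
  · exact hne (.inl (hf y h).symm)
  · exact hne (.inr (hf z h).symm)

theorem exists_mem_leaves_mem_seg [CompleteSpace M] [BoundedSpace M] (a x : M) :
    ∃ f ∈ T.leaves, x ∈ T.seg a f := by
  obtain ⟨f, hxf, hf⟩ := exists_maximal_distBtw a x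
  exact ⟨f, T.mem_leaves_of_maximal fun y hy => hf y (T.mem_seg_iff.mp hy), T.mem_seg_iff.mpr hxf⟩

end MetricTree

theorem stmt_16_general {M : Type*} [MetricSpace M] [CompleteSpace M] [BoundedSpace M]
    (T : MetricTree M) (a : M) : (Set.univ : Set M) = ⋃ f ∈ T.leaves, T.seg a f := by
  refine (Set.eq_univ_of_forall fun x => ?_).symm
  simpa only [Set.mem_iUnion₂, exists_prop] using T.exists_mem_leaves_mem_seg a x

theorem stmt_16 {M : Type*} [MetricSpace M] [CompactSpace M] (T : MetricTree M) (a : M) :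
    (Set.univ : Set M) =
      ⋃ f ∈ {f : M | ∀ x y : M, f ∉ T.seg x y \ {x, y}}, T.seg a f :=
  stmt_16_general T a
end
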